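/- Let ε ∈ (0,1) be irrational with continued fraction expansion ε = [0; a_1, a_2, …], let ℓ satisfy max{ε, 1−ε} < ℓ < 1, and let x0 ∈ [0,ℓ). If the 3iet word u_{ε,ℓ,x0} has infinite index, ind(u_{ε,ℓ,x0}) = +∞, then the sequence of partial quotients (a_n)_{n≥1} is unbounded, i.e. sup_{n} a_n = +∞. -/

import Mathlib

/-!
If `u = u_{ε,ℓ,x0}` has period `p` on a window of length `(K+1)p`, then the orbit points
`x_n` satisfy `x_{n+p} = x_n + δ` throughout the first `Kp` steps of the window, where
`δ = P - Qε` with `p ≤ Q ≤ 2p`. Since `x_n` and `x_n + δ` lie in the same exchanged interval,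
the orbit segment of length `Kp` misses a whole interval of length `|δ|` adjacent to the
discontinuity `ε`.

Bounded partial quotients make `ε` badly approximable: `q |qε - p| ≥ c` (`badly_approx`). So
`|δ| ≥ c/(2p)`. On the other hand, Dirichlet's theorem yields a reduced fraction of
denominator `q ≤ Kp` close to `ε`, and bad approximability forces `q ≥ cKp`; the points
`x - kε`, `k < q`, then meet every arc of length `3/q ≤ 3/(cKp)` (`rotation_hits`). As `T_{ε,ℓ}`
is the map induced on `[0,ℓ)` by the rotation by `-ε`, the orbit segment meets such arcs as
well (`orbit_hits`). For `K ≥ 6/c²` these facts are contradictory.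
-/


/-- The alphabet of 3iet words. -/
inductive L3 | A | B | C
deriving DecidableEq, Inhabited

/-- The three-interval exchange transformation `T_{ε,ℓ}`. -/
noncomputable def T3 (ε ℓ : ℝ) (x : ℝ) : ℝ :=
  if x < ℓ - 1 + ε then x + 1 - ε
  else if x < ε then x + 1 - 2*ε
  else x - ε

/-- The 3iet word `u_{ε,ℓ,x0}` coding the orbit of `x0` under `T_{ε,ℓ}`. -/
noncomputable def u3 (ε ℓ x0 : ℝ) (n : ℕ) : L3 :=
  if (T3 ε ℓ)^[n] x0 < ℓ - 1 + ε then L3.A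
  else if (T3 ε ℓ)^[n] x0 < ε then L3.B
  else L3.C

/-- The two-interval exchange transformation `T_ε`. -/
noncomputable def T2 (ε : ℝ) (x : ℝ) : ℝ := if x < ε then x + 1 - ε else x - ε

/-- The Sturmian word `u_{ε,x0}` of slope `ε` coding the orbit of `x0` under `T_ε`
(letter `0` is `false`, letter `1` is `true`). -/
noncomputable def u2 (ε x0 : ℝ) (n : ℕ) : Bool := if (T2 ε)^[n] x0 < ε then false else true

/-- `w` is a factor of the infinite word `u`. -/
def IsFactor {α : Type*} (w : List α) (u : ℕ → α) : Prop :=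
  ∃ i : ℕ, w = (List.range w.length).map fun j => u (i + j)

/-- The prefix of length `m` of the periodic infinite word `www⋯`;
for `|w| ≤ m` this is the fractional power `w^{m/|w|}`. -/
def powPrefix {α : Type*} [Inhabited α] (w : List α) (m : ℕ) : List α :=
  (List.range m).map fun j => w.getD (j % w.length) default

/-- The index of the factor `w` in the infinite word `u`:
`sup {r ∈ ℚ, r ≥ 1, r|w| ∈ ℕ | w^r is a factor of u}`, as an element of `ℝ ∪ {+∞}`. -/
noncomputable def factorIndex {α : Type*} [Inhabited α] (u : ℕ → α) (w : List α) : EReal :=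
  sSup {x : EReal | ∃ m : ℕ, w.length ≤ m ∧ IsFactor (powPrefix w m) u ∧
    x = (((m : ℝ) / (w.length : ℝ) : ℝ) : EReal)}

/-- The index of the infinite word `u`: `sup {ind(w) | w a nonempty factor of u}`. -/
noncomputable def wordIndex {α : Type*} [Inhabited α] (u : ℕ → α) : EReal :=
  sSup {x : EReal | ∃ w : List α, w ≠ [] ∧ IsFactor w u ∧ x = factorIndex u w}

/-- The Gauss map `x ↦ {1/x}`. -/
noncomputable def gaussMap (x : ℝ) : ℝ := Int.fract x⁻¹

/-- `cfa ε n` is the partial quotient `a_{n+1}` of the continued fraction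
expansion `ε = [0; a₁, a₂, a₃, …]` of the irrational `ε ∈ (0,1)`. -/
noncomputable def cfa (ε : ℝ) (n : ℕ) : ℕ := ⌊(gaussMap^[n] ε)⁻¹⌋₊

/-- The morphism `σ01 : A ↦ 0, B ↦ 01, C ↦ 1`. -/
def sigma01 : L3 → List Bool
  | L3.A => [false]
  | L3.B => [false, true]
  | L3.C => [true]

/-- The morphism `σ10 : A ↦ 0, B ↦ 10, C ↦ 1`. -/
def sigma10 : L3 → List Bool
  | L3.A => [false]
  | L3.B => [true, false]
  | L3.C => [true]

/-- The image `φ(u₀)φ(u₁)φ(u₂)⋯` of an infinite word `u` under a (nonerasing) morphism `φ`. -/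
def morphWord (φ : L3 → List Bool) (u : ℕ → L3) (m : ℕ) : Bool :=
  ((List.range (m+1)).flatMap fun k => φ (u k)).getD m false

/-- `u` is a uniformly recurrent infinite word: every factor occurs infinitely often
with bounded gaps (every window of some length `R` contains an occurrence). -/
def UniformlyRecurrent {α : Type*} (u : ℕ → α) : Prop :=
  ∀ w : List α, IsFactor w u → ∃ R : ℕ, ∀ i : ℕ, ∃ j : ℕ, i ≤ j ∧ j < i + R ∧
    w = (List.range w.length).map fun t => u (j + t)

/-- `u` is eventually periodic. -/
def EventuallyPeriodic {α : Type*} (u : ℕ → α) : Prop :=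
  ∃ N p : ℕ, 0 < p ∧ ∀ n : ℕ, N ≤ n → u (n + p) = u n

/-- The standard words of `ε = [0; a₁, a₂, …]`, with the index shifted by one:
`sw ε 0 = s₋₁ = 1`, `sw ε 1 = s₀ = 0`, `sw ε 2 = s₁ = s₀^{a₁-1} s₋₁`, and
`sw ε (n+3) = s_{n+2} = s_{n+1}^{a_{n+2}} s_n`. -/
noncomputable def sw (ε : ℝ) : ℕ → List Bool
  | 0 => [true]
  | 1 => [false]
  | 2 => (List.replicate (cfa ε 0 - 1) ([false] : List Bool)).flatten ++ [true]
  | (n+3) => (List.replicate (cfa ε (n+1)) (sw ε (n+2))).flatten ++ sw ε (n+1)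

/-- Denominators of the convergents of `ε`, shifted by one: `qq ε 0 = q₋₁ = 0`,
`qq ε 1 = q₀ = 1`, and `qq ε (n+2) = q_{n+1} = a_{n+1} q_n + q_{n-1}`. -/
noncomputable def qq (ε : ℝ) : ℕ → ℕ
  | 0 => 0
  | 1 => 1
  | (n+2) => cfa ε n * qq ε (n+1) + qq ε n

/-- `u` is a 3iet word. -/
def Is3ietWord (u : ℕ → L3) : Prop :=
  ∃ ε ℓ x0 : ℝ, Irrational ε ∧ 0 < ε ∧ ε < 1 ∧ max ε (1 - ε) < ℓ ∧ ℓ < 1 ∧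
    x0 ∈ Set.Ico 0 ℓ ∧ u = u3 ε ℓ x0

/-- `v` is a Sturmian word. -/
def IsSturmianWord (v : ℕ → Bool) : Prop :=
  ∃ ε x0 : ℝ, Irrational ε ∧ 0 < ε ∧ ε < 1 ∧ x0 ∈ Set.Ico (0:ℝ) 1 ∧ v = u2 ε x0

/-- The infinite binary word `v1` is amicable with `v2` (`v1 ∝ v2`). -/
def AmicableInf (v1 v2 : ℕ → Bool) : Prop :=
  ∃ w : ℕ → L3, v1 = morphWord sigma01 w ∧ v2 = morphWord sigma10 w

/-- The morphism `Φ_k : A ↦ 0, B ↦ 01^{k+1}, C ↦ 01^k`. -/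
def Phi (k : ℕ) : L3 → List Bool
  | L3.A => [false]
  | L3.B => false :: List.replicate (k+1) true
  | L3.C => false :: List.replicate k true

/-- The infinite word `B₀B₁B₂⋯` obtained by concatenating the sequence of
(nonempty) blocks `B`. -/
def concatOfBlocks (B : ℕ → List Bool) (m : ℕ) : Bool :=
  ((List.range (m+1)).flatMap B).getD m false

/-! ### Bounded partial quotients and bad approximability -/

/-- The form `|qx - p| (q + pt) / (1 + xt)` is invariant under the Gauss step
`x = 1/(a+y)`, `t' = 1/(a+t)`, `(q, p) ↦ (p, q - ap)`; this allows a descent on `q` that loses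
no constants. For `t = 0` the form is `q |qx - p|`. -/
lemma badly_approx_aux (M : ℕ) (q : ℕ) : ∀ (x t : ℝ) (p : ℕ), Irrational x → 0 < x → x < 1 →
    (∀ n, cfa x n ≤ M) → 0 ≤ t → t ≤ 1 → 1 ≤ q →
    (1 + x * t) / (2 * (M + 1)) ≤ |(q : ℝ) * x - p| * (q + p * t) := by
  induction q using Nat.strong_induction_on with
  | _ q ih =>
  intro x t p hirr hx0 hx1 hM ht0 ht1 hq
  have hq' : (1 : ℝ) ≤ q := by exact_mod_cast hq
  have hM0 : (0 : ℝ) ≤ M := Nat.cast_nonneg M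
  -- the case `p = 0`, also needed for the pair obtained after one Gauss step
  have key0 : ∀ (z s : ℝ) (b : ℕ), 0 < z → z < 1 → cfa z 0 ≤ M → 0 ≤ s → s ≤ 1 → 1 ≤ b →
      (1 + z * s) / (2 * (M + 1)) ≤ |(b : ℝ) * z - (0 : ℕ)| * (b + (0 : ℕ) * s) := by
    intro z s b hz0 hz1 hzM hs0 hs1 hb
    have hb' : (1 : ℝ) ≤ b := by exact_mod_cast hb
    have h1 : z⁻¹ < M + 1 := by
      have := Nat.lt_floor_add_one z⁻¹
      have h2 : (⌊z⁻¹⌋₊ : ℝ) ≤ M := by exact_mod_cast hzM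
      linarith
    have h3 : 1 < z * (M + 1) := by
      have := mul_lt_mul_of_pos_left h1 hz0
      rwa [mul_inv_cancel₀ hz0.ne'] at this
    have h5 : z ≤ b * z * b := by
      have hbb : 1 ≤ (b : ℝ) * b := by nlinarith
      nlinarith
    rw [Nat.cast_zero, sub_zero, zero_mul, add_zero, abs_of_pos (by positivity),
      div_le_iff₀ (by positivity)]
    have h6 : z * s ≤ 1 := by nlinarith
    nlinarith
  have hcf0 : cfa x 0 = ⌊x⁻¹⌋₊ := rfl
  obtain ⟨a, ha⟩ : ∃ a : ℕ, a = ⌊x⁻¹⌋₊ := ⟨_, rfl⟩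
  obtain ⟨y, hy⟩ : ∃ y : ℝ, y = gaussMap x := ⟨_, rfl⟩
  have haM : a ≤ M := by have := hM 0; rwa [hcf0, ← ha] at this
  have hinv : 1 < x⁻¹ := (one_lt_inv₀ hx0).2 hx1
  have ha1 : 1 ≤ a := by rw [ha]; exact Nat.le_floor (by exact_mod_cast hinv.le)
  have hay : x⁻¹ = a + y := by
    rw [hy, ha, gaussMap, natCast_floor_eq_intCast_floor (by positivity)]
    exact (Int.floor_add_fract _).symm
  have hyirr : Irrational y := by
    have h := hirr.inv
    rw [hay] at h
    exact Irrational.of_natCast_add a h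
  have hy0 : 0 < y := lt_of_le_of_ne (hy ▸ Int.fract_nonneg _) (hyirr.ne_zero).symm
  have hy1 : y < 1 := hy ▸ Int.fract_lt_one _
  have hyM : ∀ n, cfa y n ≤ M := by
    intro n
    have := hM (n + 1)
    rwa [cfa, Function.iterate_succ_apply, ← hy] at this
  have hxy : x * (a + y) = 1 := by rw [← hay]; exact mul_inv_cancel₀ hx0.ne'
  have ha1' : (1 : ℝ) ≤ a := by exact_mod_cast ha1
  have haM' : (a : ℝ) ≤ M := by exact_mod_cast haM
  rcases Nat.eq_zero_or_pos p with rfl | hp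
  · exact key0 x t q hx0 hx1 (hM 0) ht0 ht1 hq
  have hp' : (1 : ℝ) ≤ p := by exact_mod_cast hp
  rcases Nat.lt_or_ge q (p * a) with hlt | hge
  · -- here `p/q` overshoots `x` so much that no descent is needed
    have hlt' : (q : ℝ) + 1 ≤ p * a := by exact_mod_cast hlt
    have e1 : (q : ℝ) * x - p = - (x * (p * (a + y) - q)) := by
      linear_combination (p : ℝ) * hxy
    have hpy : 0 < p * y := by positivity
    have e2 : x ≤ |(q : ℝ) * x - p| := by
      rw [e1, abs_neg, abs_of_pos (by apply mul_pos hx0; nlinarith)]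
      nlinarith
    have e3 : 1 ≤ (q : ℝ) + p * t := by nlinarith
    have e4 : x ≤ |(q : ℝ) * x - p| * (q + p * t) := by nlinarith [abs_nonneg ((q : ℝ) * x - p)]
    have h3 : 1 ≤ x * (M + 1) := by nlinarith
    rw [div_le_iff₀ (by positivity)]
    have h6 : x * t ≤ 1 := by nlinarith
    nlinarith
  · obtain ⟨p', rfl⟩ := Nat.exists_eq_add_of_le hge
    have hs0 : (0 : ℝ) < a + t := by linarith
    have hs : (1 / (a + t)) * (a + t) = 1 := by field_simp
    obtain ⟨s, hsdef⟩ : ∃ s : ℝ, s = 1 / (a + t) := ⟨_, rfl⟩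
    rw [← hsdef] at hs
    have hspos : 0 < s := by rw [hsdef]; positivity
    have hs1 : s ≤ 1 := by nlinarith
    have step : (1 + y * s) / (2 * (M + 1)) ≤ |(p : ℝ) * y - p'| * (p + p' * s) := by
      rcases Nat.eq_zero_or_pos p' with rfl | hp'0
      · exact key0 y s p hy0 hy1 (hyM 0) hspos.le hs1 hp
      · exact ih p (by nlinarith) y s p' hyirr hy0 hy1 hyM hspos.le hs1 hp
    have e1 : ((p * a + p' : ℕ) : ℝ) * x - p = - (x * (p * y - p')) := by
      push_cast
      linear_combination (p : ℝ) * hxy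
    have e2 : ((p * a + p' : ℕ) : ℝ) + p * t = (a + t) * (p + p' * s) := by
      push_cast
      linear_combination (-(p' : ℝ)) * hs
    have e3 : 1 + x * t = x * (a + t) * (1 + y * s) := by
      linear_combination (-(1 : ℝ)) * hxy - x * y * hs
    rw [e1, e2, e3, abs_neg, abs_mul, abs_of_pos hx0]
    have := mul_le_mul_of_nonneg_left step (mul_pos hx0 hs0).le
    calc _ = x * (a + t) * ((1 + y * s) / (2 * (M + 1))) := by ring
      _ ≤ _ := this
      _ = _ := by ring

lemma badly_approx (M : ℕ) (x : ℝ) (hirr : Irrational x) (hx0 : 0 < x) (hx1 : x < 1)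
    (hM : ∀ n, cfa x n ≤ M) (q : ℕ) (hq : 1 ≤ q) (p : ℤ) :
    1 / (2 * (M + 1)) ≤ |(q : ℝ) * x - p| * q := by
  have main : ∀ p : ℕ, 1 / (2 * ((M : ℝ) + 1)) ≤ |(q : ℝ) * x - p| * q := by
    intro p
    have := badly_approx_aux M q x 0 p hirr hx0 hx1 hM le_rfl zero_le_one hq
    simpa using this
  rcases le_total 0 p with hp | hp
  · lift p to ℕ using hp
    exact_mod_cast main p
  · -- a negative numerator approximates worse than `0`
    refine (main 0).trans ?_
    have hp' : (p : ℝ) ≤ 0 := by exact_mod_cast hp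
    have hqx : 0 ≤ (q : ℝ) * x := by positivity
    refine mul_le_mul_of_nonneg_right ?_ (Nat.cast_nonneg q)
    rw [Nat.cast_zero, sub_zero, abs_of_nonneg hqx, abs_of_nonneg (by linarith)]
    linarith

/-! ### Density of rotation orbits -/

/-- Modulo `1`, the points `x - kε`, `k < r.den`, follow the equally spaced points
`x - k r`, with error below `1 / r.den`. -/
lemma rotation_hits (ε x a : ℝ) (r : ℚ) (hr : |ε - r| ≤ 1 / ((r.den : ℝ) * r.den)) :
    ∃ (k : ℕ) (z : ℤ), k < r.den ∧ a ≤ x - k * ε + z ∧ x - k * ε + z < a + 3 / r.den := by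
  have hd : (0 : ℤ) < r.den := by exact_mod_cast r.den_pos
  have hdR : (0 : ℝ) < r.den := by exact_mod_cast r.den_pos
  obtain ⟨u, v, huv⟩ : IsCoprime r.num (r.den : ℤ) := by
    rw [Int.isCoprime_iff_gcd_eq_one]
    exact r.reduced
  -- `x - t / den` lies in the middle third of the target
  obtain ⟨t, ht⟩ : ∃ t : ℤ, t = ⌊(x - a) * r.den⌋ - 1 := ⟨_, rfl⟩
  have ht1 : (t : ℝ) + 1 ≤ (x - a) * r.den := by
    have := Int.floor_le ((x - a) * r.den)
    rw [ht]; push_cast; linarith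
  have ht2 : (x - a) * r.den < t + 2 := by
    have := Int.lt_floor_add_one ((x - a) * r.den)
    rw [ht]; push_cast; linarith
  obtain ⟨k, hk⟩ := Int.eq_ofNat_of_zero_le (Int.emod_nonneg (t * u) hd.ne')
  have hklt : k < r.den := by
    have := Int.emod_lt_of_pos (t * u) hd
    omega
  have hdm := Int.emod_add_mul_ediv (t * u) r.den
  rw [hk] at hdm
  obtain ⟨z, hz⟩ : ∃ z : ℤ, z = -(t * v) - (t * u / r.den) * r.num := ⟨_, rfl⟩
  have hkz : (k : ℤ) * r.num = t + r.den * z := by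
    rw [hz]
    linear_combination r.num * hdm + t * huv
  have hkzR : (k : ℝ) * r.num = t + r.den * z := by exact_mod_cast hkz
  have hrR : (r : ℝ) * r.den = r.num := by exact_mod_cast Rat.mul_den_eq_num r
  have herr : |k * (ε - r) * r.den| ≤ 1 := by
    rw [abs_mul, abs_mul, Nat.abs_cast, Nat.abs_cast]
    have hk' : (k : ℝ) ≤ r.den := by exact_mod_cast hklt.le
    calc (k : ℝ) * |ε - r| * r.den ≤ r.den * (1 / ((r.den : ℝ) * r.den)) * r.den := by gcongr
      _ = 1 := by field_simp
  obtain ⟨h1, h2⟩ := abs_le.1 herr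
  have hid : (x - k * ε + z - a) * r.den = (x - a) * r.den - t - k * (ε - r) * r.den := by
    linear_combination (-(k : ℝ)) * hrR - hkzR
  refine ⟨k, z, hklt, ?_, ?_⟩
  · have : 0 ≤ (x - k * ε + z - a) * r.den := by rw [hid]; linarith
    have := nonneg_of_mul_nonneg_left this hdR
    linarith
  · have : x - k * ε + z - a < 3 / r.den := by
      rw [lt_div_iff₀ hdR, hid]; linarith
    linarith

/-- For a badly approximable `ε`, the first `N` points of each rotation orbit meet every arc
of length `3/(cN)`. -/
lemma rotation_hits_of_badly_approx (ε c : ℝ) (hc : 0 < c)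
    (hba : ∀ q : ℕ, 1 ≤ q → ∀ p : ℤ, c ≤ |(q : ℝ) * ε - p| * q) (N : ℕ) (hN : 1 ≤ N)
    (x a : ℝ) :
    ∃ (k : ℕ) (z : ℤ), k < N ∧ a ≤ x - k * ε + z ∧ x - k * ε + z < a + 3 / (c * N) := by
  obtain ⟨r, hr, hrN⟩ := Real.exists_rat_abs_sub_le_and_den_le ε hN
  have hdR : (0 : ℝ) < r.den := by exact_mod_cast r.den_pos
  have hNR : (0 : ℝ) < N := by exact_mod_cast hN
  have hrN' : (r.den : ℝ) ≤ N := by exact_mod_cast hrN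
  have hrR : (r : ℝ) * r.den = r.num := by exact_mod_cast Rat.mul_den_eq_num r
  have hden : c * N ≤ r.den := by
    have h1 := hba r.den r.den_pos r.num
    have h2 : (r.den : ℝ) * ε - r.num = (ε - r) * r.den := by rw [← hrR]; ring
    rw [h2, abs_mul, Nat.abs_cast] at h1
    have h3 : |ε - r| * r.den ≤ 1 / (N + 1) := by
      calc |ε - r| * r.den ≤ 1 / ((N + 1) * r.den) * r.den := by gcongr
        _ = _ := by field_simp
    have h4 : c ≤ 1 / (N + 1) * r.den := h1.trans (by gcongr)
    have h5 : 1 / ((N : ℝ) + 1) * r.den ≤ 1 / N * r.den := by gcongr; linarith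
    have h6 := mul_le_mul_of_nonneg_right (h4.trans h5) hNR.le
    calc c * N ≤ _ := h6
      _ = r.den := by field_simp
  obtain ⟨k, z, hk, hz1, hz2⟩ := rotation_hits ε x a r (hr.trans (by gcongr; linarith))
  refine ⟨k, z, by omega, hz1, hz2.trans_le ?_⟩
  gcongr

/-! ### Orbits of the three-interval exchange -/

lemma T3_mem {ε ℓ x : ℝ} (hl0 : ε < ℓ) (hl : 1 - ε < ℓ) (hl1 : ℓ < 1)
    (hx : x ∈ Set.Ico 0 ℓ) : T3 ε ℓ x ∈ Set.Ico 0 ℓ := by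
  obtain ⟨ha, hb⟩ := hx
  unfold T3
  split_ifs <;> constructor <;> linarith

lemma T3_iterate_mem {ε ℓ x : ℝ} (hl0 : ε < ℓ) (hl : 1 - ε < ℓ) (hl1 : ℓ < 1)
    (hx : x ∈ Set.Ico 0 ℓ) (n : ℕ) : (T3 ε ℓ)^[n] x ∈ Set.Ico 0 ℓ := by
  induction n with
  | zero => exact hx
  | succ n ih => rw [Function.iterate_succ_apply']; exact T3_mem hl0 hl hl1 ih

/-- `T3 ε ℓ` is the first return map to `[0,ℓ)` of the rotation by `-ε`, so it reaches every
point of `[0,ℓ)` on the rotation orbit at least as early. -/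
lemma orbit_hits {ε ℓ : ℝ} (hl0 : ε < ℓ) (hl : 1 - ε < ℓ)
    (hl1 : ℓ < 1) (k : ℕ) : ∀ (x : ℝ) (z : ℤ), x ∈ Set.Ico 0 ℓ →
    x - k * ε + z ∈ Set.Ico 0 ℓ → ∃ j ≤ k, (T3 ε ℓ)^[j] x = x - k * ε + z := by
  induction k using Nat.strong_induction_on with
  | _ k ih =>
  intro x z hx hy
  have hTx := T3_mem hl0 hl hl1 hx
  obtain ⟨hx1, hx2⟩ := hx
  obtain ⟨hy1, hy2⟩ := hy
  have descend : ∀ (k' : ℕ) (z' : ℤ), k' < k →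
      T3 ε ℓ x - k' * ε + z' = x - k * ε + z →
      ∃ j ≤ k, (T3 ε ℓ)^[j] x = x - k * ε + z := by
    intro k' z' hk' he
    obtain ⟨j, hj, hje⟩ := ih k' hk' (T3 ε ℓ x) z' hTx (by rw [he]; exact ⟨hy1, hy2⟩)
    exact ⟨j + 1, by omega, by rw [Function.iterate_succ_apply, hje, he]⟩
  rcases k with _ | k
  · have hz : z = 0 := by
      have a1 : (z : ℝ) < 1 := by push_cast at hy2; linarith
      have a2 : (-1 : ℝ) < z := by push_cast at hy1; linarith
      have b1 : z < 1 := by exact_mod_cast a1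
      have b2 : -1 < z := by exact_mod_cast a2
      omega
    exact ⟨0, le_rfl, by simp [hz]⟩
  by_cases hA : x < ℓ - 1 + ε
  · exact descend k (z - 1) (by omega) (by unfold T3; rw [if_pos hA]; push_cast; ring)
  by_cases hB : x < ε
  · rcases k with _ | k
    · -- after a single rotation step the point lies in `[ℓ, 1)`
      exfalso
      push_cast at hy1 hy2
      have a1 : (0 : ℝ) < z := by linarith
      have a2 : (z : ℝ) < 1 := by linarith
      have b1 : 0 < z := by exact_mod_cast a1
      have b2 : z < 1 := by exact_mod_cast a2
      omega
    · exact descend k (z - 1) (by omega)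
        (by unfold T3; rw [if_neg hA, if_pos hB]; push_cast; ring)
  · exact descend k z (by omega) (by unfold T3; rw [if_neg hA, if_neg hB]; push_cast; ring)

/-- The translation performed by a three-interval exchange on the interval of a letter. -/
def trans3 (ε : ℝ) : L3 → ℝ
  | L3.A => 1 - ε
  | L3.B => 1 - 2 * ε
  | L3.C => -ε

lemma iterate_succ_eq_add_trans3 (ε ℓ x : ℝ) (n : ℕ) :
    (T3 ε ℓ)^[n + 1] x = (T3 ε ℓ)^[n] x + trans3 ε (u3 ε ℓ x n) := by
  rw [Function.iterate_succ_apply', u3]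
  unfold T3
  split_ifs <;> simp only [trans3] <;> ring

lemma displacement_form (ε ℓ x : ℝ) (i p : ℕ) : ∃ (Q : ℕ) (P : ℤ), p ≤ Q ∧ Q ≤ 2 * p ∧
    (T3 ε ℓ)^[i + p] x - (T3 ε ℓ)^[i] x = P - Q * ε := by
  induction p with
  | zero => exact ⟨0, 0, le_rfl, le_rfl, by simp⟩
  | succ p ih =>
    obtain ⟨Q, P, h1, h2, h3⟩ := ih
    have h := iterate_succ_eq_add_trans3 ε ℓ x (i + p)
    rw [← add_assoc]
    cases hu : u3 ε ℓ x (i + p) <;> rw [hu, trans3] at h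
    · exact ⟨Q + 1, P + 1, by omega, by omega, by push_cast; linarith⟩
    · exact ⟨Q + 2, P + 1, by omega, by omega, by push_cast; linarith⟩
    · exact ⟨Q + 1, P, by omega, by omega, by push_cast; linarith⟩

/-! ### Long periodic windows -/

lemma no_long_period (ε ℓ x0 c : ℝ) (h0 : 0 < ε) (hl0 : ε < ℓ) (hl : 1 - ε < ℓ)
    (hl1 : ℓ < 1) (hx0 : x0 ∈ Set.Ico 0 ℓ) (hc : 0 < c)
    (hba : ∀ q : ℕ, 1 ≤ q → ∀ p : ℤ, c ≤ |(q : ℝ) * ε - p| * q)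
    (K p i : ℕ) (hp : 1 ≤ p) (hK1 : 1 ≤ K) (hK2 : 6 / c ^ 2 ≤ K) (hK3 : 1 / ε ≤ K)
    (hK4 : 1 / (ℓ - ε) ≤ K)
    (hper : ∀ j < K * p, u3 ε ℓ x0 (i + j + p) = u3 ε ℓ x0 (i + j)) : False := by
  have hmem := T3_iterate_mem hl0 hl hl1 hx0
  obtain ⟨Q, P, hQ1, hQ2, hPQ⟩ := displacement_form ε ℓ x0 i p
  obtain ⟨δ, hδ⟩ : ∃ δ, δ = (T3 ε ℓ)^[i + p] x0 - (T3 ε ℓ)^[i] x0 := ⟨_, rfl⟩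
  rw [← hδ] at hPQ
  have hshift : ∀ j ≤ K * p, (T3 ε ℓ)^[i + j + p] x0 = (T3 ε ℓ)^[i + j] x0 + δ := by
    intro j
    induction j with
    | zero => intro _; rw [hδ]; simp
    | succ j ih =>
      intro hj
      have e1 := iterate_succ_eq_add_trans3 ε ℓ x0 (i + j + p)
      have e2 := iterate_succ_eq_add_trans3 ε ℓ x0 (i + j)
      rw [hper j (by omega), ih (by omega)] at e1
      rw [show i + (j + 1) + p = i + j + p + 1 by ring, show i + (j + 1) = i + j + 1 by ring,
        e1, e2]
      ring
  have hmult : ∀ k ≤ K, (T3 ε ℓ)^[i + k * p] x0 = (T3 ε ℓ)^[i] x0 + k * δ := by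
    intro k
    induction k with
    | zero => intro _; simp
    | succ k ih =>
      intro hk
      rw [show i + (k + 1) * p = i + k * p + p by ring,
        hshift (k * p) (Nat.mul_le_mul_right p (by omega)), ih (by omega)]
      push_cast; ring
  have hKR : (0 : ℝ) < K := by exact_mod_cast hK1
  have hpR : (0 : ℝ) < p := by exact_mod_cast hp
  have hup : |δ| < 1 / K := by
    rw [lt_div_iff₀ hKR, ← Nat.abs_cast K, ← abs_mul, abs_lt]
    have a1 := hmult K le_rfl
    have a2 := hmem (i + K * p)
    have a3 := hmem i
    rw [a1] at a2
    constructor <;> nlinarith [a2.1, a2.2, a3.1, a3.2]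
  have hlow : c / (2 * p) ≤ |δ| := by
    have b := hba Q (by omega) P
    have hQR : (Q : ℝ) ≤ 2 * p := by exact_mod_cast hQ2
    rw [abs_sub_comm, ← hPQ] at b
    rw [div_le_iff₀ (by positivity)]
    exact b.trans (by gcongr)
  have hgap : 3 / (c * (K * p : ℕ)) ≤ |δ| := by
    refine le_trans ?_ hlow
    rw [div_le_iff₀ (by positivity)] at hK2
    push_cast
    rw [div_le_div_iff₀ (by positivity) (by positivity)]
    nlinarith
  have hKε : 1 / K ≤ ε := by
    rw [div_le_iff₀ hKR]; rw [div_le_iff₀ h0] at hK3; linarith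
  have hKℓ : 1 / K ≤ ℓ - ε := by
    rw [div_le_iff₀ hKR]; rw [div_le_iff₀ (by linarith)] at hK4; linarith
  -- any arc of length `|δ|` inside `[0,ℓ)` is visited during the window
  have hit : ∀ a : ℝ, 0 ≤ a → a + |δ| ≤ ℓ → ∃ j < K * p,
      a ≤ (T3 ε ℓ)^[i + j] x0 ∧ (T3 ε ℓ)^[i + j] x0 < a + |δ| := by
    intro a ha0 ha1
    obtain ⟨k, z, hk, hz1, hz2⟩ := rotation_hits_of_badly_approx ε c hc hba (K * p)
      (Nat.mul_pos hK1 hp) ((T3 ε ℓ)^[i] x0) a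
    obtain ⟨j, hj, hje⟩ := orbit_hits hl0 hl hl1 k ((T3 ε ℓ)^[i] x0) z (hmem i)
      ⟨by linarith, by linarith⟩
    refine ⟨j, by omega, ?_⟩
    rw [add_comm i j, Function.iterate_add_apply, hje]
    exact ⟨hz1, by linarith⟩
  have side : ∀ n, u3 ε ℓ x0 n = L3.C ↔ ε ≤ (T3 ε ℓ)^[n] x0 := by
    intro n
    unfold u3
    split_ifs with c1 c2
    · simp; linarith
    · simpa using c2
    · simpa using c2
  rcases le_or_gt 0 δ with hs | hs
  · rw [abs_of_nonneg hs] at hit hup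
    obtain ⟨j, hj, e1, e2⟩ := hit (ε - δ) (by linarith) (by linarith)
    have : u3 ε ℓ x0 (i + j + p) = L3.C := by
      rw [side, hshift j hj.le]; linarith
    rw [hper j hj, side] at this
    linarith
  · rw [abs_of_neg hs] at hit hup
    obtain ⟨j, hj, e1, e2⟩ := hit ε h0.le (by linarith)
    have : u3 ε ℓ x0 (i + j) = L3.C := by rw [side]; exact e1
    rw [← hper j hj, side, hshift j hj.le] at this
    linarith

lemma exists_long_period {α : Type*} [Inhabited α] (u : ℕ → α) (h : wordIndex u = ⊤) (K : ℕ) :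
    ∃ p i : ℕ, 1 ≤ p ∧ ∀ j < K * p, u (i + j + p) = u (i + j) := by
  have hlt : (((K + 1 : ℕ) : ℝ) : EReal) < wordIndex u := by rw [h]; exact EReal.coe_lt_top _
  obtain ⟨_, ⟨w, hw, _, rfl⟩, hlt⟩ := lt_sSup_iff.1 hlt
  obtain ⟨_, ⟨m, _, ⟨i, hi⟩, rfl⟩, hlt⟩ := lt_sSup_iff.1 hlt
  have hp : 0 < w.length := List.length_pos_iff.2 hw
  have hpR : (0 : ℝ) < w.length := by exact_mod_cast hp
  rw [EReal.coe_lt_coe_iff, lt_div_iff₀ hpR] at hlt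
  have hm : (K + 1) * w.length < m := by exact_mod_cast hlt
  have hlen : (powPrefix w m).length = m := by simp [powPrefix]
  have hval : ∀ j < m, u (i + j) = w.getD (j % w.length) default := by
    intro j hj
    rw [hlen, powPrefix] at hi
    have := congrArg (fun l => l[j]?) hi
    simp [hj] at this
    simp [← this]
  refine ⟨w.length, i, hp, fun j hj => ?_⟩
  rw [add_mul, one_mul] at hm
  rw [add_assoc, hval _ (by omega), hval _ (by omega), Nat.add_mod_right]

/-- if a 3iet word has infinite index then the partial quotients of `ε`
are unbounded, i.e. `sup_n a_n = +∞`. -/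
theorem threeIet_infinite_index_implies_unbounded_partial_quotients
    (ε ℓ x0 : ℝ) (hirr : Irrational ε) (h0 : 0 < ε) (h1 : ε < 1)
    (hl : max ε (1 - ε) < ℓ) (hl1 : ℓ < 1) (hx0 : x0 ∈ Set.Ico 0 ℓ)
    (hind : wordIndex (u3 ε ℓ x0) = ⊤) :
    (⨆ n : ℕ, (cfa ε n : ℕ∞)) = ⊤ := by
  by_contra hne
  obtain ⟨M, hM⟩ : ∃ M : ℕ, ∀ n, cfa ε n ≤ M := by
    obtain ⟨M, hM⟩ := WithTop.ne_top_iff_exists.1 hne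
    refine ⟨M, fun n => ?_⟩
    have h : (cfa ε n : ℕ∞) ≤ (M : ℕ∞) := (le_iSup (fun n => (cfa ε n : ℕ∞)) n).trans hM.ge
    exact_mod_cast h
  have hba := badly_approx M ε hirr h0 h1 hM
  obtain ⟨hl0, hl2⟩ := max_lt_iff.1 hl
  obtain ⟨c, hcdef⟩ : ∃ c : ℝ, c = 1 / (2 * ((M : ℝ) + 1)) := ⟨_, rfl⟩
  rw [← hcdef] at hba
  have hc : 0 < c := by rw [hcdef]; positivity
  obtain ⟨K, hK⟩ := exists_nat_ge (max (6 / c ^ 2) (max (1 / ε) (1 / (ℓ - ε))))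
  simp only [max_le_iff] at hK
  obtain ⟨hK2, hK3, hK4⟩ := hK
  have hK1 : 1 ≤ K := by
    have : (0 : ℝ) < K := lt_of_lt_of_le (by positivity) hK3
    exact_mod_cast this
  obtain ⟨p, i, hp, hper⟩ := exists_long_period _ hind K
  exact no_long_period ε ℓ x0 c h0 hl0 hl2 hl1 hx0 hc hba K p i hp hK1 hK2 hK3 hK4 hper
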